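/- Let (X, W) be a left Frobenius pair in A. Then X̂ is a thick subcategory of A, and indeed Thick(X) = X̂; that is, X̂ is closed under direct summands, and for every short exact sequence 0 → A' → B → C → 0 in A, if two of A', B, C lie in X̂ then so does the third, and X̂ is the smallest such subcategory containing X. -/

import Mathlib

/-!
Each class `X̂ₙ` is closed under extensions, and everything else follows from that by chasing
pullbacks along the first step `0 → K → E → M → 0` of a resolution.

To see the closure, use the cogenerator `W ⊆ X^⊥` to embed `A ∈ X̂ₙ` into a hull
`0 → A → H → X' → 0` with `H ∈ X̂ₙ ∩ X^⊥` and `X' ∈ X`. If `0 → A → B → D → 0` is exact with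
`D ∈ X`, its pushout along `A → H` splits because `Ext¹(D, H) = 0`. So `B` is the kernel of an
epimorphism `H ⊞ D → X'` onto an object of `X`, and hence lies in `X̂ₙ`. The case `D ∈ X̂ₙ` follows
by induction on `n`.

For direct summands, cover `A ⊞ B ∈ X̂ₙ₊₁` by `E ∈ X`. The kernels `L`, `L'` of `E → A` and `E → B`
have `L ⊞ L'` as the kernel of `E ⊞ E → A ⊞ B`, so `L ⊞ L' ∈ X̂ₙ`, and one concludes by
induction on `n`.
-/

open CategoryTheory CategoryTheory.Limits CategoryTheory.Abelian ZeroObject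

universe w v u

namespace FrobeniusPaper

variable {C : Type u} [Category.{v} C] [Abelian C]

/-- `f, g` form a short exact sequence `0 → A → B → D → 0` in the abelian category `C`. -/
def IsSES {A B D : C} (f : A ⟶ B) (g : B ⟶ D) : Prop :=
  ∃ w : f ≫ g = 0, (ShortComplex.mk f g w).ShortExact

/-- A "subcategory" in the sense of the paper: a full additive subcategory, regarded as the
predicate of membership for its objects, closed under isomorphisms and direct summands. -/
structure IsSubcat (X : C → Prop) : Prop where
  zero : X 0
  iso_closed : ∀ {A B : C}, (A ≅ B) → X A → X B
  biprod_closed : ∀ {A B : C}, X A → X B → X (A ⊞ B)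
  summand_closed : ∀ {A M : C} (i : A ⟶ M) (p : M ⟶ A), i ≫ p = 𝟙 A → X M → X A

/-- `Hat X n M` means `M ∈ X̂ₙ`, i.e. there is an exact sequence
`0 → Xₙ → ⋯ → X₁ → X₀ → M → 0` with all `Xᵢ ∈ X`. -/
def Hat (X : C → Prop) : ℕ → C → Prop
  | 0, M => X M
  | (n + 1), M => ∃ (K E : C) (f : K ⟶ E) (g : E ⟶ M), IsSES f g ∧ X E ∧ Hat X n K

/-- `M ∈ X̂ = ⋃ₙ X̂ₙ`. -/
def HatAll (X : C → Prop) (M : C) : Prop := ∃ n, Hat X n M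

/-- `W` is a cogenerator for `X`. -/
def IsCogenerator (W X : C → Prop) : Prop :=
  (∀ M, W M → X M) ∧
    ∀ M, X M → ∃ (W₀ X' : C) (f : M ⟶ W₀) (g : W₀ ⟶ X'), IsSES f g ∧ W W₀ ∧ X X'

/-- `W` is a generator for `X`. -/
def IsGenerator (W X : C → Prop) : Prop :=
  (∀ M, W M → X M) ∧
    ∀ M, X M → ∃ (X' W₀ : C) (f : X' ⟶ W₀) (g : W₀ ⟶ M), IsSES f g ∧ W W₀ ∧ X X'

/-- `X` is closed under extensions. -/
def ExtClosed (X : C → Prop) : Prop :=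
  ∀ ⦃A B D : C⦄ (f : A ⟶ B) (g : B ⟶ D), IsSES f g → X A → X D → X B

/-- `X` is closed under kernels of epimorphisms. -/
def KerEpiClosed (X : C → Prop) : Prop :=
  ∀ ⦃A B D : C⦄ (f : A ⟶ B) (g : B ⟶ D), IsSES f g → X B → X D → X A

/-- A thick subcategory: closed under direct summands and two-out-of-three for
short exact sequences. -/
def IsThickSub (T : C → Prop) : Prop :=
  IsSubcat T ∧ ∀ ⦃A B D : C⦄ (f : A ⟶ B) (g : B ⟶ D), IsSES f g →
    (T A → T B → T D) ∧ (T A → T D → T B) ∧ (T B → T D → T A)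

/-- Membership in `Thick(X)`, the smallest thick subcategory containing `X`. -/
def thickClosure (X : C → Prop) (M : C) : Prop :=
  ∀ T : C → Prop, IsThickSub T → (∀ N, X N → T N) → T M

variable [HasExt.{w} C]

/-- `Y ∈ X^⊥`, i.e. `Extⁱ(M, Y) = 0` for all `i ≥ 1` and `M ∈ X`. -/
def rightPerp (X : C → Prop) (Y : C) : Prop :=
  ∀ M, X M → ∀ i : ℕ, 1 ≤ i → Subsingleton (Abelian.Ext M Y i)

/-- A left Frobenius pair `(X, W)`. -/
structure LeftFrobenius (X W : C → Prop) : Prop where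
  subX : IsSubcat X
  subW : IsSubcat W
  extClosed : ExtClosed X
  kerEpiClosed : KerEpiClosed X
  cogen : IsCogenerator W X
  perp : ∀ M, W M → rightPerp X M

/-- A strong left Frobenius pair `(X, W)`. -/
structure StrongLeftFrobenius (X W : C → Prop) extends LeftFrobenius X W : Prop where
  gen : IsGenerator W X
  proj : ∀ M N, W M → X N → ∀ i : ℕ, 1 ≤ i → Subsingleton (Abelian.Ext M N i)

/-- A cotorsion pair `(U, V)` on an extension-closed subcategory `B` of `C`. -/
structure CotorsionPairOn (B U V : C → Prop) : Prop where
  subU : ∀ M, U M → B M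
  subV : ∀ M, V M → B M
  isoU : ∀ {A B' : C}, (A ≅ B') → U A → U B'
  summandU : ∀ {A M : C} (i : A ⟶ M) (p : M ⟶ A), i ≫ p = 𝟙 A → U M → U A
  isoV : ∀ {A B' : C}, (A ≅ B') → V A → V B'
  summandV : ∀ {A M : C} (i : A ⟶ M) (p : M ⟶ A), i ≫ p = 𝟙 A → V M → V A
  ext1 : ∀ M N, U M → V N → Subsingleton (Abelian.Ext M N 1)
  res : ∀ M, B M → ∃ (V₀ U₀ : C) (f : V₀ ⟶ U₀) (g : U₀ ⟶ M), IsSES f g ∧ U U₀ ∧ V V₀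
  cores : ∀ M, B M → ∃ (V₀ U₀ : C) (f : M ⟶ V₀) (g : V₀ ⟶ U₀), IsSES f g ∧ U U₀ ∧ V V₀

variable {𝒜 : Type u} [Category.{v} 𝒜] [Abelian 𝒜]

namespace IsSES

lemma of_exists_lift {A B D : 𝒜} {f : A ⟶ B} {g : B ⟶ D} [Mono f] [Epi g] (w : f ≫ g = 0)
    (h : ∀ {T : 𝒜} (k : T ⟶ B), k ≫ g = 0 → ∃ l, l ≫ f = k) : IsSES f g := by
  refine ⟨w, ShortComplex.ShortExact.mk' (ShortComplex.exact_of_f_is_kernel _ ?_) ‹_› ‹_›⟩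
  exact KernelFork.IsLimit.ofι' _ _ fun k hk => ⟨(h k hk).choose, (h k hk).choose_spec⟩

lemma zero_id (M : 𝒜) : IsSES (0 : (0 : 𝒜) ⟶ M) (𝟙 M) :=
  of_exists_lift zero_comp fun k hk => ⟨0, by simpa using hk.symm⟩

lemma kernel_ι {A B : 𝒜} (g : A ⟶ B) [Epi g] : IsSES (kernel.ι g) g :=
  ⟨kernel.condition g, { exact := ShortComplex.exact_kernel g }⟩

variable {A B D : 𝒜} {f : A ⟶ B} {g : B ⟶ D}

lemma comp_eq_zero (h : IsSES f g) : f ≫ g = 0 := h.1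

lemma mono (h : IsSES f g) : Mono f := h.2.mono_f

lemma epi (h : IsSES f g) : Epi g := h.2.epi_g

lemma exists_lift (h : IsSES f g) {T : 𝒜} (k : T ⟶ B) (hk : k ≫ g = 0) : ∃ l, l ≫ f = k := by
  have := h.mono
  exact ⟨h.2.exact.lift k hk, h.2.exact.lift_f k hk⟩

lemma op (h : IsSES f g) : IsSES g.op f.op := ⟨_, h.2.op⟩

lemma unop {A B D : 𝒜ᵒᵖ} {f : A ⟶ B} {g : B ⟶ D} (h : IsSES f g) : IsSES g.unop f.unop :=
  ⟨_, h.2.unop⟩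

lemma comp_iso {D' : 𝒜} (h : IsSES f g) (e : D ≅ D') : IsSES f (g ≫ e.hom) :=
  ⟨by rw [reassoc_of% h.comp_eq_zero, zero_comp],
    ShortComplex.shortExact_of_iso (S₁ := .mk f g h.comp_eq_zero)
      (ShortComplex.isoMk (Iso.refl _) (Iso.refl _) e) h.2⟩

lemma biprod_map {A' B' D' : 𝒜} {f' : A' ⟶ B'} {g' : B' ⟶ D'} (h : IsSES f g)
    (h' : IsSES f' g') : IsSES (biprod.map f f') (biprod.map g g') := by
  have := h.mono
  have := h.epi
  have := h'.mono
  have := h'.epi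
  refine of_exists_lift (by ext <;> simp [h.comp_eq_zero, h'.comp_eq_zero]) fun k hk => ?_
  obtain ⟨l, hl⟩ := h.exists_lift (k ≫ biprod.fst) (by simpa using hk =≫ biprod.fst)
  obtain ⟨l', hl'⟩ := h'.exists_lift (k ≫ biprod.snd) (by simpa using hk =≫ biprod.snd)
  exact ⟨biprod.lift l l', by ext <;> simp [hl, hl']⟩

lemma exists_of_isPullback {P T : 𝒜} {p : P ⟶ B} {q : P ⟶ T} {b : T ⟶ D} (h : IsSES f g)
    (sq : IsPullback p q g b) : ∃ k : A ⟶ P, IsSES k q := by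
  have := h.mono
  have hq : Epi q := MorphismProperty.of_isPullback (P := .epimorphisms 𝒜) sq h.epi
  let k : A ⟶ P := sq.lift f 0 (by rw [h.comp_eq_zero, zero_comp])
  have : Mono k := mono_of_mono_fac (sq.lift_fst _ _ _)
  refine ⟨k, of_exists_lift (sq.lift_snd _ _ _) fun t ht => ?_⟩
  obtain ⟨l, hl⟩ := h.exists_lift (t ≫ p)
    (by rw [Category.assoc, sq.w, reassoc_of% ht, zero_comp])
  exact ⟨l, sq.hom_ext (by simp [k, hl]) (by simp [k, ht])⟩

lemma exists_of_isPushout {P T : 𝒜} {b : A ⟶ T} {p : B ⟶ P} {q : T ⟶ P} (h : IsSES f g)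
    (sq : IsPushout f b p q) : ∃ k : P ⟶ D, IsSES q k := by
  obtain ⟨k, hk⟩ := h.op.exists_of_isPullback sq.op.flip
  exact ⟨k.unop, hk.unop⟩

lemma comp_of_isPullback {E P : 𝒜} {e : E ⟶ B} {p : P ⟶ E} {q : P ⟶ A} [Epi e]
    (h : IsSES f g) (sq : IsPullback p q e f) : IsSES p (e ≫ g) := by
  have := h.epi
  have hp : Mono p := MorphismProperty.of_isPullback (P := .monomorphisms 𝒜) sq.flip h.mono
  refine of_exists_lift (by rw [sq.w_assoc, h.comp_eq_zero, comp_zero]) fun k hk => ?_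
  obtain ⟨l, hl⟩ := h.exists_lift (k ≫ e) (by rwa [Category.assoc])
  exact ⟨sq.lift k l hl.symm, sq.lift_fst _ _ _⟩

lemma comp_of_isPushout {E P : 𝒜} {e : B ⟶ E} {p : E ⟶ P} {q : D ⟶ P} [Mono e]
    (h : IsSES f g) (sq : IsPushout e g p q) : IsSES (f ≫ e) p :=
  (h.op.comp_of_isPullback sq.op.flip).unop

lemma nonempty_iso_biprod_of_section (h : IsSES f g) (s : D ⟶ B) (hs : s ≫ g = 𝟙 D) :
    Nonempty (B ≅ A ⊞ D) :=
  ⟨(ShortComplex.Splitting.ofExactOfSection _ h.2.exact s hs h.mono).isoBinaryBiproduct⟩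

section Ext

variable [HasExt.{w} 𝒜]

lemma nonempty_iso_biprod_of_subsingleton_ext (h : IsSES f g)
    (hE : Subsingleton (Abelian.Ext D A 1)) : Nonempty (B ≅ A ⊞ D) := by
  obtain ⟨x, hx⟩ := Abelian.Ext.covariant_sequence_exact₃ D h.2 (Abelian.Ext.mk₀ (𝟙 D))
    (zero_add 1) (Subsingleton.elim _ _)
  obtain ⟨s, rfl⟩ := Abelian.Ext.addEquiv₀.symm.surjective x
  refine h.nonempty_iso_biprod_of_section s (Abelian.Ext.addEquiv₀.symm.injective ?_)
  simpa using hx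

lemma rightPerp_cokernel {X : 𝒜 → Prop} (h : IsSES f g) (hA : rightPerp X A)
    (hB : rightPerp X B) : rightPerp X D := by
  intro M hM i hi
  have := hA M hM (i + 1) (by lia)
  have := hB M hM i hi
  refine subsingleton_of_forall_eq 0 fun x => ?_
  obtain ⟨y, rfl⟩ := Abelian.Ext.covariant_sequence_exact₃ M h.2 x rfl (Subsingleton.elim _ _)
  rw [Subsingleton.elim y 0, Abelian.Ext.zero_comp]

end Ext

end IsSES

variable {X : 𝒜 → Prop}

namespace Hat

variable {n : ℕ} {A B D : 𝒜} {f : A ⟶ B} {g : B ⟶ D}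

lemma succ (hX : IsSubcat X) (hA : Hat X n A) : Hat X (n + 1) A := by
  induction n generalizing A with
  | zero => exact ⟨0, A, 0, 𝟙 A, .zero_id A, hA, hX.zero⟩
  | succ n ih =>
    obtain ⟨K, E, k, e, hke, hE, hK⟩ := hA
    exact ⟨K, E, k, e, hke, hE, ih hK⟩

lemma mono (hX : IsSubcat X) {m : ℕ} (hmn : m ≤ n) (hA : Hat X m A) : Hat X n A :=
  Nat.le_induction hA (fun _ _ => succ hX) n hmn

lemma of_mem (hX : IsSubcat X) (hA : X A) : Hat X n A :=
  mono hX (m := 0) n.zero_le hA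

lemma of_iso (hX : IsSubcat X) (e : A ≅ B) (hA : Hat X n A) : Hat X n B := by
  cases n with
  | zero => exact hX.iso_closed e hA
  | succ n =>
    obtain ⟨K, E, k, g, hkg, hE, hK⟩ := hA
    exact ⟨K, E, k, g ≫ e.hom, hkg.comp_iso e, hE, hK⟩

lemma biprod (hX : IsSubcat X) (hA : Hat X n A) (hB : Hat X n B) : Hat X n (A ⊞ B) := by
  induction n generalizing A B with
  | zero => exact hX.biprod_closed hA hB
  | succ n ih =>
    obtain ⟨K, E, k, e, hke, hE, hK⟩ := hA
    obtain ⟨K', E', k', e', hke', hE', hK'⟩ := hB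
    exact ⟨K ⊞ K', E ⊞ E', _, _, hke.biprod_map hke', hX.biprod_closed hE hE', ih hK hK'⟩

lemma kernel_of_mem (hker : KerEpiClosed X) (h : IsSES f g) (hB : Hat X n B) (hD : X D) :
    Hat X n A := by
  cases n with
  | zero => exact hker f g h hB hD
  | succ n =>
    obtain ⟨K, E, k, e, hke, hE, hK⟩ := hB
    have := hke.epi
    have sq := IsPullback.of_hasPullback e f
    obtain ⟨l, hl⟩ := hke.exists_of_isPullback sq
    exact ⟨K, pullback e f, l, _, hl, hker _ _ (h.comp_of_isPullback sq) hE hD, hK⟩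

lemma cokernel_of_succ (hext : ExtClosed (Hat X n)) (h : IsSES f g) (hA : Hat X n A)
    (hB : Hat X (n + 1) B) : Hat X (n + 1) D := by
  obtain ⟨K, E, k, e, hke, hE, hK⟩ := hB
  have := hke.epi
  have sq := IsPullback.of_hasPullback e f
  obtain ⟨l, hl⟩ := hke.exists_of_isPullback sq
  exact ⟨pullback e f, E, _, _, h.comp_of_isPullback sq, hE, hext _ _ hl hK hA⟩

lemma kernel_of_succ (hker : KerEpiClosed X) (hext : ExtClosed (Hat X n)) (h : IsSES f g)
    (hB : Hat X n B) (hD : Hat X (n + 1) D) : Hat X n A := by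
  obtain ⟨K, E, k, e, hke, hE, hK⟩ := hD
  have sq := IsPullback.of_hasPullback e g
  obtain ⟨l, hl⟩ := hke.exists_of_isPullback sq
  obtain ⟨m, hm⟩ := h.exists_of_isPullback sq.flip
  exact kernel_of_mem hker hm (hext _ _ hl hK hB) hE

lemma of_biprod_right (hX : IsSubcat X) (hker : KerEpiClosed X)
    (hext : ∀ n, ExtClosed (Hat X n)) (hAB : Hat X n (A ⊞ B)) : Hat X n B := by
  induction n generalizing A B with
  | zero => exact hX.summand_closed biprod.inr biprod.snd biprod.inr_snd hAB
  | succ n ih =>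
    have ⟨K, E, k, e, hke, hE, _⟩ := hAB
    have := hke.epi
    have hsum := (IsSES.kernel_ι (e ≫ biprod.fst)).biprod_map (.kernel_ι (e ≫ biprod.snd))
    have hEE : Hat X n (E ⊞ E) := of_mem hX (hX.biprod_closed hE hE)
    exact ⟨_, E, _, _, .kernel_ι (e ≫ biprod.snd), hE,
      ih (kernel_of_succ hker (hext n) hsum hEE hAB)⟩

lemma isSubcat (hX : IsSubcat X) (hker : KerEpiClosed X) (hext : ∀ n, ExtClosed (Hat X n))
    (n : ℕ) : IsSubcat (Hat X n) where
  zero := of_mem hX hX.zero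
  iso_closed := of_iso hX
  biprod_closed := biprod hX
  summand_closed i p hip hM := by
    have : Epi p := epi_of_epi_fac hip
    obtain ⟨e⟩ := (IsSES.kernel_ι p).nonempty_iso_biprod_of_section i hip
    exact of_biprod_right hX hker hext (hM.of_iso hX e)

end Hat

lemma HatAll.exists_common (hX : IsSubcat X) {A B : 𝒜} (hA : HatAll X A) (hB : HatAll X B) :
    ∃ n, Hat X n A ∧ Hat X n B := by
  obtain ⟨m, hm⟩ := hA
  obtain ⟨n, hn⟩ := hB
  exact ⟨max m n, hm.mono hX (le_max_left m n), hn.mono hX (le_max_right m n)⟩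

lemma isThickSub_hatAll_of_extClosed (hX : IsSubcat X) (hker : KerEpiClosed X)
    (hext : ∀ n, ExtClosed (Hat X n)) : IsThickSub (HatAll X) := by
  have hsub := Hat.isSubcat hX hker hext
  refine ⟨⟨⟨0, hX.zero⟩, ?_, ?_, ?_⟩, fun A B D f g h => ⟨?_, ?_, ?_⟩⟩
  · rintro A B e ⟨n, hA⟩
    exact ⟨n, (hsub n).iso_closed e hA⟩
  · intro A B hA hB
    obtain ⟨n, hA, hB⟩ := hA.exists_common hX hB
    exact ⟨n, (hsub n).biprod_closed hA hB⟩
  · rintro A M i p hip ⟨n, hM⟩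
    exact ⟨n, (hsub n).summand_closed i p hip hM⟩
  · intro hA hB
    obtain ⟨n, hA, hB⟩ := hA.exists_common hX hB
    exact ⟨n + 1, Hat.cokernel_of_succ (hext n) h hA (hB.succ hX)⟩
  · intro hA hD
    obtain ⟨n, hA, hD⟩ := hA.exists_common hX hD
    exact ⟨n, hext n f g h hA hD⟩
  · intro hB hD
    obtain ⟨n, hB, hD⟩ := hB.exists_common hX hD
    exact ⟨n, Hat.kernel_of_succ hker (hext n) h hB (hD.succ hX)⟩

lemma IsThickSub.of_hat {T : 𝒜 → Prop} (hT : IsThickSub T) (hXT : ∀ N, X N → T N) {n : ℕ}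
    {M : 𝒜} (hM : Hat X n M) : T M := by
  induction n generalizing M with
  | zero => exact hXT M hM
  | succ n ih =>
    obtain ⟨K, E, k, e, hke, hE, hK⟩ := hM
    exact (hT.2 k e hke).1 (ih hK) (hXT E hE)

namespace LeftFrobenius

variable [HasExt.{w} 𝒜] {W : 𝒜 → Prop} {n : ℕ} {A B D : 𝒜}

lemma exists_hull (hF : LeftFrobenius X W) (hA : Hat X n A) :
    ∃ (H X' : 𝒜) (f : A ⟶ H) (g : H ⟶ X'), IsSES f g ∧ Hat X n H ∧ rightPerp X H ∧ X X' := by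
  induction n generalizing A with
  | zero =>
    obtain ⟨W₀, X', f, g, hfg, hW, hX'⟩ := hF.cogen.2 A hA
    exact ⟨W₀, X', f, g, hfg, hF.cogen.1 _ hW, hF.perp _ hW, hX'⟩
  | succ n ih =>
    obtain ⟨K, E, k, e, hke, hE, hK⟩ := hA
    obtain ⟨H, X₁, i, j, hij, hH, hHperp, hX₁⟩ := ih hK
    -- `P := E ⊔_K H` is an extension of `X₁` by `E`, so it lies in `X` and embeds into `W`.
    have sqP := IsPushout.of_hasPushout k i
    obtain ⟨a, ha⟩ := hke.exists_of_isPushout sqP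
    obtain ⟨b, hb⟩ := hij.exists_of_isPushout sqP.flip
    obtain ⟨W₀, X₂, s, t, hst, hW, hX₂⟩ :=
      hF.cogen.2 (pushout k i) (hF.extClosed _ _ hb hE hX₁)
    -- Then `Q := W₀ ⊔_P A` is the hull: `0 → H → W₀ → Q → 0` and `0 → A → Q → X₂ → 0` are exact.
    have := hst.mono
    have sqQ := IsPushout.of_hasPushout s a
    obtain ⟨q, hq⟩ := hst.exists_of_isPushout sqQ
    have hHQ := ha.comp_of_isPushout sqQ
    exact ⟨pushout s a, X₂, _, q, hq, ⟨H, W₀, _, _, hHQ, hF.cogen.1 _ hW, hH⟩,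
      hHQ.rightPerp_cokernel hHperp (hF.perp _ hW), hX₂⟩

lemma hat_extension_of_mem (hF : LeftFrobenius X W) {f : A ⟶ B} {g : B ⟶ D} (h : IsSES f g)
    (hA : Hat X n A) (hD : X D) : Hat X n B := by
  obtain ⟨H, X', i, j, hij, hH, hHperp, hX'⟩ := hF.exists_hull hA
  have sq := IsPushout.of_hasPushout f i
  obtain ⟨a, ha⟩ := h.exists_of_isPushout sq
  obtain ⟨b, hb⟩ := hij.exists_of_isPushout sq.flip
  obtain ⟨e⟩ := ha.nonempty_iso_biprod_of_subsingleton_ext (hHperp D hD 1 le_rfl)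
  have hP : Hat X n (pushout f i) :=
    (hH.biprod hF.subX (.of_mem hF.subX hD)).of_iso hF.subX e.symm
  exact .kernel_of_mem hF.kerEpiClosed hb hP hX'

lemma extClosed_hat (hF : LeftFrobenius X W) (n : ℕ) : ExtClosed (Hat X n) := by
  induction n with
  | zero => exact hF.extClosed
  | succ n ih =>
    rintro A B D f g h hA ⟨K, E, k, e, hke, hE, hK⟩
    have sq := IsPullback.of_hasPullback e g
    obtain ⟨l, hl⟩ := hke.exists_of_isPullback sq
    obtain ⟨m, hm⟩ := h.exists_of_isPullback sq.flip
    exact .cokernel_of_succ ih hl hK (hF.hat_extension_of_mem hm hA hE)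

end LeftFrobenius

theorem statement5_general [HasExt.{w} 𝒜] (X W : 𝒜 → Prop) (hF : LeftFrobenius X W) :
    IsThickSub (HatAll X) ∧ (∀ M, X M → HatAll X M) ∧
      (∀ M, thickClosure X M ↔ HatAll X M) := by
  have hthick : IsThickSub (HatAll X) :=
    isThickSub_hatAll_of_extClosed hF.subX hF.kerEpiClosed hF.extClosed_hat
  have hmem : ∀ M, X M → HatAll X M := fun M hM => ⟨0, hM⟩
  refine ⟨hthick, hmem, fun M => ⟨fun hM => hM _ hthick hmem, ?_⟩⟩
  rintro ⟨n, hM⟩ T hT hXT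
  exact hT.of_hat hXT hM

/-- For a left Frobenius pair `(X, W)`, the class `X̂` is a thick subcategory
of `C` and coincides with `Thick(X)`, the smallest thick subcategory containing `X`. -/
theorem statement5 {C : Type u} [Category.{v} C] [Abelian C]
    [EnoughProjectives C] [EnoughInjectives C] [HasExt.{w} C]
    (X W : C → Prop) (hF : LeftFrobenius X W) :
    IsThickSub (HatAll X) ∧ (∀ M, X M → HatAll X M) ∧
      (∀ M, thickClosure X M ↔ HatAll X M) :=
  statement5_general X W hF

end FrobeniusPaper
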